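/- Let ξ be Voiculescu's alternative rotation: ξ(b₀Xb₁⋯Xb_n) = Xb₁⋯Xb_n b₀, and θ(p) = [X, p]. Then for q ∈ B⟨X⟩, the equation δ_{X:B}[p] = q has a solution p ∈ B⟨X⟩ if and only if (ξ∘θ)[q] = 0. -/

import Mathlib

open scoped TensorProduct

noncomputable section

/-- `(A, ι, X)` is the free product `B *_ℂ ℂ⟨X⟩`, characterized by its universal
property: every algebra map `φ : B → C` together with a choice of element `x ∈ C`
extends uniquely to an algebra map `A → C` sending `X` to `x`. -/
def IsFreeProduct {B A : Type} [Ring B] [Algebra ℂ B] [Ring A] [Algebra ℂ A]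
    (ι : B →ₐ[ℂ] A) (X : A) : Prop :=
  ∀ (C : Type) [Ring C] [Algebra ℂ C], ∀ (φ : B →ₐ[ℂ] C) (x : C),
    ∃! ψ : A →ₐ[ℂ] C, ψ.comp ι = φ ∧ ψ X = x

/-- the monomial `b₀ X b₁ ⋯ X bₙ`, where `bs = [b₁, …, bₙ]`. -/
def mono {B A : Type} [Ring B] [Algebra ℂ B] [Ring A] [Algebra ℂ A]
    (ι : B →ₐ[ℂ] A) (X : A) (b0 : B) (bs : List B) : A :=
  ι b0 * (bs.map (fun b => X * ι b)).prod

/-- the cyclic derivative `δ = μ ∘ σ ∘ ∂` associated with a difference quotient `D`. -/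
def cyclicDer {A : Type} [Ring A] [Algebra ℂ A] (D : A →ₗ[ℂ] A ⊗[ℂ] A) : A →ₗ[ℂ] A :=
  (LinearMap.mul' ℂ A) ∘ₗ (TensorProduct.comm ℂ A A).toLinearMap ∘ₗ D

/-- the operation `u # b`, determined by `(a ⊗ c) # b = a b c`. -/
def sharp {A : Type} [Ring A] [Algebra ℂ A] (u : A ⊗[ℂ] A) (b : A) : A :=
  LinearMap.mul' ℂ A (u * (b ⊗ₜ[ℂ] (1 : A)))

/-- the divergence operator `∂* : u ↦ u # X`, i.e. `(a ⊗ c) ↦ a X c`. -/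
def divg {A : Type} [Ring A] [Algebra ℂ A] (X : A) : A ⊗[ℂ] A →ₗ[ℂ] A :=
  (LinearMap.mul' ℂ A) ∘ₗ (LinearMap.mulRight ℂ (X ⊗ₜ[ℂ] (1 : A)))

/-- the number operator `N = ∂* ∘ ∂`. -/
def numOp {A : Type} [Ring A] [Algebra ℂ A] (X : A) (D : A →ₗ[ℂ] A ⊗[ℂ] A) :
    A →ₗ[ℂ] A :=
  divg X ∘ₗ D

/-!
Cyclic rotation of the letters defines a linear map `T` on `B⟨X⟩` by
`T (b₀Xb₁⋯Xbₙ) = b₁X⋯XbₙXb₀`. Then `(ξ ∘ θ) q = X (q - T q)` and left multiplication by `X` is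
injective, so the kernel of `ξ ∘ θ` consists of the fixed points of `T`. On a monomial `m` with `n`
letters from `B`, `T ^ n` is the identity and `δ (X m) = (1 + T + ⋯ + T ^ (n - 1)) m`. Since `δ` is
invariant under cyclic permutation of products, its range is therefore fixed by `T`. Conversely,
with `G m = n⁻¹ X m`, the geometric sum gives `δ ∘ G = 1 + F ∘ (T - 1)` for a linear map `F`, and
thus `δ (G q) = q` whenever `T q = q`.
-/

theorem sum_geom_sum_mul {R : Type*} [Ring R] (x : R) (n : ℕ) :
    (∑ k ∈ Finset.range n, ∑ j ∈ Finset.range k, x ^ j) * (x - 1) =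
      ∑ k ∈ Finset.range n, x ^ k - n := by
  rw [Finset.sum_mul]
  simp [geom_sum_mul]

section Monomials

variable {B A : Type} [Ring B] [Algebra ℂ B] [Ring A] [Algebra ℂ A]

/-- The product `X b₁ ⋯ X bₙ` attached to `[b₁, …, bₙ]`: the monomials fixed by `ξ`, of which the
cyclic derivative is computed. -/
def xProd (ι : B →ₐ[ℂ] A) (X : A) (l : List B) : A :=
  (l.map fun b => X * ι b).prod

/-- The monomial `b₀ X b₁ ⋯ X bₙ` attached to its list of letters `[b₀, …, bₙ]`, on which cyclic
permutation is `List.rotate`. The empty list corresponds to no monomial and is sent to `0`. -/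
def word (ι : B →ₐ[ℂ] A) (X : A) : List B → A
  | [] => 0
  | b :: l => mono ι X b l

variable (ι : B →ₐ[ℂ] A) (X : A)

@[simp]
theorem xProd_nil : xProd ι X [] = 1 := rfl

@[simp]
theorem xProd_cons (b : B) (l : List B) : xProd ι X (b :: l) = X * ι b * xProd ι X l := by
  simp [xProd]

@[simp]
theorem xProd_append (l m : List B) : xProd ι X (l ++ m) = xProd ι X l * xProd ι X m := by
  simp [xProd]

@[simp]
theorem word_nil : word ι X [] = 0 := rfl

@[simp]
theorem word_cons (b : B) (l : List B) : word ι X (b :: l) = ι b * xProd ι X l := rfl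

theorem X_mul_word {l : List B} (hl : l ≠ []) : X * word ι X l = xProd ι X l := by
  obtain ⟨b, m, rfl⟩ := List.exists_cons_of_ne_nil hl
  simp [mul_assoc]

end Monomials

namespace IsFreeProduct

variable {B A : Type} [Ring B] [Algebra ℂ B] [Ring A] [Algebra ℂ A] {ι : B →ₐ[ℂ] A} {X : A}

theorem adjoin_eq_top (hfree : IsFreeProduct ι X) :
    Algebra.adjoin ℂ (Set.range ι ∪ {X}) = ⊤ := by
  set S := Algebra.adjoin ℂ (Set.range ι ∪ {X})
  have hι (b : B) : ι b ∈ S := Algebra.subset_adjoin (Or.inl ⟨b, rfl⟩)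
  have hX : X ∈ S := Algebra.subset_adjoin (Or.inr rfl)
  obtain ⟨ψ, ⟨hψι, hψX⟩, -⟩ := hfree S (ι.codRestrict S hι) ⟨X, hX⟩
  have hψ : S.val.comp ψ = AlgHom.id ℂ A := by
    refine (hfree A ι X).unique ⟨?_, by simp [hψX]⟩ ⟨AlgHom.id_comp ι, rfl⟩
    rw [AlgHom.comp_assoc, hψι, AlgHom.val_comp_codRestrict]
  refine Algebra.eq_top_iff.2 fun a => ?_
  rw [← AlgHom.id_apply (R := ℂ) a, ← hψ]
  exact (ψ a).2

theorem span_word_eq_top (hfree : IsFreeProduct ι X) :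
    Submodule.span ℂ (word ι X '' {l | l ≠ []}) = ⊤ := by
  rw [eq_top_iff, ← Algebra.top_toSubmodule, ← hfree.adjoin_eq_top, Algebra.adjoin_eq_span]
  refine Submodule.span_mono fun a ha => ?_
  induction ha using Submonoid.closure_induction_left with
  | one => exact ⟨[1], by simp, by simp⟩
  | mul_left x hx y _ hy =>
    obtain ⟨l, hl, rfl⟩ := hy
    rcases hx with ⟨c, rfl⟩ | rfl
    · obtain ⟨b, m, rfl⟩ := List.exists_cons_of_ne_nil hl
      exact ⟨c * b :: m, by simp, by simp [mul_assoc]⟩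
    · exact ⟨1 :: l, by simp, by simp [X_mul_word ι x hl]⟩

theorem linearMap_ext (hfree : IsFreeProduct ι X) {M : Type*} [AddCommGroup M] [Module ℂ M]
    {f g : A →ₗ[ℂ] M} (h : ∀ l ≠ [], f (word ι X l) = g (word ι X l)) : f = g :=
  LinearMap.ext_on hfree.span_word_eq_top (Set.forall_mem_image.2 h)

/-- The degree of a monomial is read off through the algebra map `B⟨X⟩ → B⟨X⟩[t]` fixing `B` and
sending `X` to `X t`. -/
theorem exists_linearMap_by_length (hfree : IsFreeProduct ι X) {M : Type*} [AddCommGroup M]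
    [Module ℂ M] (f : ℕ → A →ₗ[ℂ] M) :
    ∃ g : A →ₗ[ℂ] M, ∀ l ≠ [], g (word ι X l) = f l.length (word ι X l) := by
  obtain ⟨ψ, ⟨hψι, hψX⟩, -⟩ := hfree (Polynomial A) (Polynomial.CAlgHom.comp ι)
    (Polynomial.monomial 1 X)
  have hψB (b : B) : ψ (ι b) = Polynomial.monomial 0 (ι b) := DFunLike.congr_fun hψι b
  have hψP (l : List B) : ψ (xProd ι X l) = Polynomial.monomial l.length (xProd ι X l) := by
    induction l with
    | nil => simp
    | cons b l ih =>
      simp [ih, hψX, hψB, Polynomial.monomial_mul_monomial, add_comm]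
  refine ⟨Polynomial.lsum (fun n => f (n + 1)) ∘ₗ ψ.toLinearMap, fun l hl => ?_⟩
  obtain ⟨b, m, rfl⟩ := List.exists_cons_of_ne_nil hl
  simp [hψP, hψB, Polynomial.sum_monomial_index]

/-- With `ε` the evaluation `X ↦ 0`, the left inverse is `μ ∘ (ε ⊗ id) ∘ ∂`. -/
theorem exists_leftInverse_X_mul (hfree : IsFreeProduct ι X) {D : A →ₗ[ℂ] A ⊗[ℂ] A}
    (hD : ∀ p q : A, D (p * q) = (p ⊗ₜ[ℂ] (1 : A)) * D q + D p * ((1 : A) ⊗ₜ[ℂ] q))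
    (hDX : D X = (1 : A) ⊗ₜ[ℂ] (1 : A)) :
    ∃ L : A →ₗ[ℂ] A, Function.LeftInverse L (X * ·) := by
  obtain ⟨ε, ⟨-, hεX⟩, -⟩ := hfree A ι 0
  refine ⟨LinearMap.mul' ℂ A ∘ₗ
    (Algebra.TensorProduct.map ε (AlgHom.id ℂ A)).toLinearMap ∘ₗ D, fun p => ?_⟩
  have hXD : Algebra.TensorProduct.map ε (AlgHom.id ℂ A) ((X ⊗ₜ[ℂ] (1 : A)) * D p) = 0 := by
    rw [map_mul, Algebra.TensorProduct.map_tmul, hεX, TensorProduct.zero_tmul, zero_mul]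
  simp only [LinearMap.comp_apply, AlgHom.toLinearMap_apply, hD, hDX, map_add, hXD]
  simp

end IsFreeProduct

section Rotation

variable {B A : Type} [Ring B] [Algebra ℂ B] [Ring A] [Algebra ℂ A] {ι : B →ₐ[ℂ] A} {X : A}
  {ξ T : A →ₗ[ℂ] A}

theorem xi_xProd (hξ : ∀ b l, ξ (mono ι X b l) = xProd ι X l * ι b) (l : List B) :
    ξ (xProd ι X l) = xProd ι X l := by
  simpa [mono, xProd] using hξ 1 l

theorem xi_word_mul_X (hξ : ∀ b l, ξ (mono ι X b l) = xProd ι X l * ι b) {l : List B}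
    (hl : l ≠ []) : ξ (word ι X l * X) = xProd ι X (l.rotate 1) := by
  obtain ⟨b, m, rfl⟩ := List.exists_cons_of_ne_nil hl
  have hword : word ι X (b :: m) * X = mono ι X b (m ++ [1]) := by
    simp [mono, xProd, mul_assoc]
  rw [hword, hξ]
  simp [mul_assoc]

theorem exists_rotation (hξ : ∀ b l, ξ (mono ι X b l) = xProd ι X l * ι b) {L : A →ₗ[ℂ] A}
    (hL : Function.LeftInverse L (X * ·)) :
    ∃ T : A →ₗ[ℂ] A, ∀ l, T (word ι X l) = word ι X (l.rotate 1) := by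
  refine ⟨L ∘ₗ ξ ∘ₗ LinearMap.mulRight ℂ X, fun l => ?_⟩
  rcases eq_or_ne l [] with rfl | hl
  · simp
  · have hrot : l.rotate 1 ≠ [] := by simpa using hl
    simp only [LinearMap.comp_apply, LinearMap.mulRight_apply]
    rw [xi_word_mul_X hξ hl, ← X_mul_word ι X hrot]
    exact hL _

theorem xi_commutator (hfree : IsFreeProduct ι X)
    (hξ : ∀ b l, ξ (mono ι X b l) = xProd ι X l * ι b)
    (hT : ∀ l, T (word ι X l) = word ι X (l.rotate 1)) (q : A) :
    ξ (X * q - q * X) = X * (q - T q) := by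
  have key : ξ ∘ₗ (LinearMap.mulLeft ℂ X - LinearMap.mulRight ℂ X) =
      LinearMap.mulLeft ℂ X ∘ₗ (LinearMap.id - T) := by
    refine hfree.linearMap_ext fun l hl => ?_
    have hrot : l.rotate 1 ≠ [] := by simpa using hl
    simp [hT, mul_sub, X_mul_word ι X hl, X_mul_word ι X hrot, xi_xProd hξ, xi_word_mul_X hξ hl]
  exact LinearMap.congr_fun key q

theorem rotation_pow_word (hT : ∀ l, T (word ι X l) = word ι X (l.rotate 1)) (k : ℕ)
    (l : List B) : (T ^ k) (word ι X l) = word ι X (l.rotate k) := by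
  induction k with
  | zero => simp
  | succ k ih => rw [pow_succ', Module.End.mul_apply, ih, hT, List.rotate_rotate]

end Rotation

section CyclicDerivative

variable {A : Type} [Ring A] [Algebra ℂ A]

theorem mul'_comm_tmul_one_mul (a : A) (u : A ⊗[ℂ] A) :
    LinearMap.mul' ℂ A (TensorProduct.comm ℂ A A ((a ⊗ₜ[ℂ] (1 : A)) * u)) =
      LinearMap.mul' ℂ A (TensorProduct.comm ℂ A A (u * ((1 : A) ⊗ₜ[ℂ] a))) := by
  induction u using TensorProduct.induction_on with
  | zero => simp
  | tmul x y => simp [mul_assoc]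
  | add x y hx hy => simp only [mul_add, add_mul, map_add, hx, hy]

variable {D : A →ₗ[ℂ] A ⊗[ℂ] A}

theorem cyclicDer_mul_comm
    (hD : ∀ p q : A, D (p * q) = (p ⊗ₜ[ℂ] (1 : A)) * D q + D p * ((1 : A) ⊗ₜ[ℂ] q)) (p q : A) :
    cyclicDer D (p * q) = cyclicDer D (q * p) := by
  simp only [cyclicDer, LinearMap.comp_apply, LinearEquiv.coe_coe, hD, map_add,
    mul'_comm_tmul_one_mul]
  exact add_comm _ _

variable {B : Type} [Ring B] [Algebra ℂ B] {ι : B →ₐ[ℂ] A} {X : A} {T : A →ₗ[ℂ] A}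

/-- The factor `xProd ι X m` collects the letters that cyclic invariance moves to the end. -/
theorem mul'_comm_xProd_mul_tmul_xProd
    (hD : ∀ p q : A, D (p * q) = (p ⊗ₜ[ℂ] (1 : A)) * D q + D p * ((1 : A) ⊗ₜ[ℂ] q))
    (hDX : D X = (1 : A) ⊗ₜ[ℂ] (1 : A)) (hDB : ∀ b : B, D (ι b) = 0) (l m : List B) :
    LinearMap.mul' ℂ A (TensorProduct.comm ℂ A A
        (D (xProd ι X l) * ((1 : A) ⊗ₜ[ℂ] xProd ι X m))) =
      ∑ k ∈ Finset.range l.length, word ι X ((l ++ m).rotate k) := by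
  induction l generalizing m with
  | nil =>
    have hD1 : D 1 = 0 := by simpa using hDB 1
    simp [hD1]
  | cons b l ih =>
    have hDcons : D (xProd ι X (b :: l)) =
        ((X * ι b) ⊗ₜ[ℂ] (1 : A)) * D (xProd ι X l) + (1 : A) ⊗ₜ[ℂ] (ι b * xProd ι X l) := by
      simp [hD, hDX, hDB]
    rw [hDcons, add_mul, mul_assoc, map_add, map_add, mul'_comm_tmul_one_mul, mul_assoc,
      Algebra.TensorProduct.tmul_mul_tmul, one_mul, List.length_cons, Finset.sum_range_succ']
    have hmove : xProd ι X m * (X * ι b) = xProd ι X (m ++ [b]) := by simp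
    rw [hmove, ih]
    simp [mul_assoc]

theorem cyclicDer_xProd
    (hD : ∀ p q : A, D (p * q) = (p ⊗ₜ[ℂ] (1 : A)) * D q + D p * ((1 : A) ⊗ₜ[ℂ] q))
    (hDX : D X = (1 : A) ⊗ₜ[ℂ] (1 : A)) (hDB : ∀ b : B, D (ι b) = 0)
    (hT : ∀ l, T (word ι X l) = word ι X (l.rotate 1)) (l : List B) :
    cyclicDer D (xProd ι X l) = (∑ k ∈ Finset.range l.length, T ^ k) (word ι X l) := by
  have hsum := mul'_comm_xProd_mul_tmul_xProd hD hDX hDB l []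
  rw [xProd_nil, ← Algebra.TensorProduct.one_def, mul_one, List.append_nil] at hsum
  simp only [LinearMap.sum_apply, rotation_pow_word hT]
  exact hsum

theorem rotation_cyclicDer_xProd
    (hD : ∀ p q : A, D (p * q) = (p ⊗ₜ[ℂ] (1 : A)) * D q + D p * ((1 : A) ⊗ₜ[ℂ] q))
    (hDX : D X = (1 : A) ⊗ₜ[ℂ] (1 : A)) (hDB : ∀ b : B, D (ι b) = 0)
    (hT : ∀ l, T (word ι X l) = word ι X (l.rotate 1)) (l : List B) :
    T (cyclicDer D (xProd ι X l)) = cyclicDer D (xProd ι X l) := by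
  rw [← sub_eq_zero, cyclicDer_xProd hD hDX hDB hT]
  calc T ((∑ k ∈ Finset.range l.length, T ^ k) (word ι X l)) -
        (∑ k ∈ Finset.range l.length, T ^ k) (word ι X l)
      = ((T - 1) * ∑ k ∈ Finset.range l.length, T ^ k) (word ι X l) := rfl
    _ = (T ^ l.length) (word ι X l) - word ι X l := by rw [mul_geom_sum]; rfl
    _ = 0 := by rw [rotation_pow_word hT, List.rotate_length, sub_self]

theorem rotation_cyclicDer (hfree : IsFreeProduct ι X)
    (hD : ∀ p q : A, D (p * q) = (p ⊗ₜ[ℂ] (1 : A)) * D q + D p * ((1 : A) ⊗ₜ[ℂ] q))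
    (hDX : D X = (1 : A) ⊗ₜ[ℂ] (1 : A)) (hDB : ∀ b : B, D (ι b) = 0)
    (hT : ∀ l, T (word ι X l) = word ι X (l.rotate 1)) (p : A) :
    T (cyclicDer D p) = cyclicDer D p := by
  suffices key : T ∘ₗ cyclicDer D = cyclicDer D from LinearMap.congr_fun key p
  refine hfree.linearMap_ext fun l hl => ?_
  obtain ⟨b, m, rfl⟩ := List.exists_cons_of_ne_nil hl
  rw [LinearMap.comp_apply]
  rcases List.eq_nil_or_concat' m with rfl | ⟨m, c, rfl⟩
  · simp [cyclicDer, hDB]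
  · have hcyc : cyclicDer D (word ι X (b :: (m ++ [c]))) =
        cyclicDer D (xProd ι X (m ++ [c * b])) := by
      rw [word_cons, cyclicDer_mul_comm hD]
      simp [mul_assoc]
    rw [hcyc, rotation_cyclicDer_xProd hD hDX hDB hT]

theorem exists_cyclicDer_comp_eq_id_add (hfree : IsFreeProduct ι X)
    (hD : ∀ p q : A, D (p * q) = (p ⊗ₜ[ℂ] (1 : A)) * D q + D p * ((1 : A) ⊗ₜ[ℂ] q))
    (hDX : D X = (1 : A) ⊗ₜ[ℂ] (1 : A)) (hDB : ∀ b : B, D (ι b) = 0)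
    (hT : ∀ l, T (word ι X l) = word ι X (l.rotate 1)) :
    ∃ F G : A →ₗ[ℂ] A, cyclicDer D ∘ₗ G = LinearMap.id + F ∘ₗ (T - 1) := by
  let S (n : ℕ) : Module.End ℂ A := ∑ k ∈ Finset.range n, ∑ j ∈ Finset.range k, T ^ j
  obtain ⟨F, hF⟩ := hfree.exists_linearMap_by_length fun n => (n : ℂ)⁻¹ • S n
  obtain ⟨G, hG⟩ := hfree.exists_linearMap_by_length
    fun n => (n : ℂ)⁻¹ • LinearMap.mulLeft ℂ X
  refine ⟨F, G, hfree.linearMap_ext fun l hl => ?_⟩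
  have hn : (l.length : ℂ) ≠ 0 := by simpa using hl
  have hFT : F ((T - 1) (word ι X l)) =
      (l.length : ℂ)⁻¹ • (S l.length * (T - 1)) (word ι X l) := by
    have hrot : l.rotate 1 ≠ [] := by simpa using hl
    have hFrot := hF _ hrot
    rw [List.length_rotate, ← hT] at hFrot
    simp [hF l hl, hFrot, smul_sub]
  have hδG : cyclicDer D (G (word ι X l)) =
      (l.length : ℂ)⁻¹ • (∑ k ∈ Finset.range l.length, T ^ k) (word ι X l) := by
    rw [hG l hl, LinearMap.smul_apply, LinearMap.mulLeft_apply, X_mul_word ι X hl, map_smul,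
      cyclicDer_xProd hD hDX hDB hT]
  have hcast : (l.length : Module.End ℂ A) (word ι X l) = (l.length : ℂ) • word ι X l := by
    rw [Module.End.natCast_apply, Nat.cast_smul_eq_nsmul]
  rw [LinearMap.comp_apply, LinearMap.add_apply, LinearMap.comp_apply, LinearMap.id_apply, hδG,
    hFT, sum_geom_sum_mul, LinearMap.sub_apply, hcast, smul_sub, inv_smul_smul₀ hn,
    add_sub_cancel]

end CyclicDerivative

/-- With `ξ` the rotation `ξ(b₀Xb₁⋯Xbₙ) = Xb₁⋯Xbₙb₀` and `θ(p) = [X, p] = Xp − pX`,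
the equation `δ_{X:B}[p] = q` has a solution `p ∈ B⟨X⟩` iff `(ξ∘θ)[q] = 0`. -/
theorem cyclicDer_range_iff_xi_theta
    {B A : Type} [Ring B] [Algebra ℂ B] [Ring A] [Algebra ℂ A]
    (ι : B →ₐ[ℂ] A) (X : A) (hfree : IsFreeProduct ι X)
    (D : A →ₗ[ℂ] A ⊗[ℂ] A)
    (hD : ∀ p q : A, D (p * q) = (p ⊗ₜ[ℂ] (1 : A)) * D q + D p * ((1 : A) ⊗ₜ[ℂ] q))
    (hDX : D X = (1 : A) ⊗ₜ[ℂ] (1 : A))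
    (hDB : ∀ b : B, D (ι b) = 0)
    (ξ : A →ₗ[ℂ] A)
    (hξ : ∀ (b0 : B) (bs : List B),
      ξ (mono ι X b0 bs) = (bs.map (fun b => X * ι b)).prod * ι b0) :
    ∀ q : A, (∃ p : A, cyclicDer D p = q) ↔ ξ (X * q - q * X) = 0 := by
  obtain ⟨L, hL⟩ := hfree.exists_leftInverse_X_mul hD hDX
  obtain ⟨T, hT⟩ := exists_rotation hξ hL
  have hX : IsLeftRegular X := hL.injective
  intro q
  rw [xi_commutator hfree hξ hT, hX.mul_left_eq_zero_iff, sub_eq_zero]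
  constructor
  · rintro ⟨p, rfl⟩
    exact (rotation_cyclicDer hfree hD hDX hDB hT p).symm
  · intro hq
    obtain ⟨F, G, hFG⟩ := exists_cyclicDer_comp_eq_id_add hfree hD hDX hDB hT
    refine ⟨G q, ?_⟩
    simpa [← hq] using LinearMap.congr_fun hFG q
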